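/- For every N ∈ ℕ with N ≥ 1 and all f, g ∈ L²(Ω, μ; ℂ) with g ≥ 0 μ-a.e., if K^N f = λ^N f + g then g = 0 μ-a.e. -/

import Mathlib

open MeasureTheory
open scoped ENNReal

noncomputable section

/-- Iterated integral kernels: `iterKernel μ k n` is the kernel `k_{n+1}` of the paper,
with `iterKernel μ k 0 = k₁ = k` and
`k_{N+1}(x,y) = ∫ k_N(x,z) k(z,y) dμ(z)`. -/
def iterKernel {Ω : Type*} [MeasurableSpace Ω] (μ : Measure Ω) (k : Ω → Ω → ℝ) :
    ℕ → Ω → Ω → ℝ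
  | 0 => k
  | n + 1 => fun x y => ∫ z, iterKernel μ k n x z * k z y ∂μ

/-!
Let `λ` be the spectral radius of `K`. The kernel is square integrable, so `K` and `K†` are compact,
and `λ > 0` because `K` dominates a positive multiple of the projection onto an indicator function.
An eigenvalue of modulus `λ` with eigenvector `v` gives `λ |v| ≤ K |v|`. Hence, as `s ↓ λ`, the
positive functions `ψ_s = ((s - K)⁻¹)† |v|` blow up, while `K† ψ_s = s ψ_s - |v|`; after
normalization, compactness of `K†` extracts `φ ≥ 0`, `φ ≠ 0` with `K† φ = λ φ`.

Pairing `K^N f = λ^N f + g` with `φ` gives `⟨g, φ⟩ = 0`, hence `⟨K^m g, φ⟩ = λ^m ⟨g, φ⟩ = 0` for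
all `m`. If `g ≥ 0` were nonzero, `K^m g` would be strictly positive for the `m` whose kernel is
strictly positive, forcing `⟨K^m g, φ⟩ > 0`.
-/

open ContinuousLinearMap Filter Topology
open scoped NNReal ComplexOrder

section Resolvent

theorem resolvent_mul_self_eq {R A : Type*} [CommRing R] [Ring A] [Algebra R A] {a : A} {z : R}
    (hz : z ∈ resolventSet R a) : resolvent a z * a = z • resolvent a z - 1 := by
  have hinv : resolvent a z * (algebraMap R A z - a) = 1 := Ring.inverse_mul_cancel _ hz
  rw [mul_sub, ← Algebra.commutes, ← Algebra.smul_def, sub_eq_iff_eq_add] at hinv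
  rw [hinv, add_sub_cancel_left]

variable {A : Type*} [NormedRing A] [NormedAlgebra ℂ A] [CompleteSpace A]

theorem summable_norm_pow_div_pow_of_spectralRadius_lt {a : A} {t : ℝ≥0}
    (ht : spectralRadius ℂ a < t) : Summable fun n : ℕ => ‖a ^ n‖ / (t : ℝ) ^ n := by
  obtain ⟨q, haq, hqt⟩ := ENNReal.lt_iff_exists_nnreal_btwn.1 ht
  have hqt : q < t := mod_cast hqt
  have hroot : ∀ᶠ n : ℕ in atTop, (‖a ^ n‖₊ : ℝ≥0∞) ^ (1 / n : ℝ) < q :=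
    (spectrum.pow_nnnorm_pow_one_div_tendsto_nhds_spectralRadius a).eventually_lt_const haq
  have hpow : ∀ᶠ n : ℕ in atTop, ‖a ^ n‖ ≤ (q : ℝ) ^ n := by
    filter_upwards [hroot, eventually_gt_atTop 0] with n hn hn0
    rw [one_div, ENNReal.rpow_inv_lt_iff (by positivity), ENNReal.rpow_natCast] at hn
    exact_mod_cast hn.le
  have hgeom : Summable fun n : ℕ => ((q : ℝ) / t) ^ n :=
    summable_geometric_of_lt_one (by positivity) ((div_lt_one (mod_cast hqt.pos)).2 hqt)
  refine hgeom.of_norm_bounded_eventually_nat (hpow.mono fun n hn => ?_)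
  rw [Real.norm_of_nonneg (by positivity), div_pow]
  gcongr

theorem hasSum_resolvent {a : A} {z : ℂ} (hz : spectralRadius ℂ a < ‖z‖₊) :
    HasSum (fun n : ℕ => z⁻¹ ^ (n + 1) • a ^ n) (resolvent a z) := by
  have hz0 : z ≠ 0 := by rintro rfl; simp at hz
  have hsum : Summable fun n : ℕ => (z⁻¹ • a) ^ n := by
    refine (summable_norm_pow_div_pow_of_spectralRadius_lt hz).of_norm_bounded fun n => ?_
    simp [smul_pow, norm_smul, div_eq_inv_mul]
  have hfactor : algebraMap ℂ A z - a = z • (1 - z⁻¹ • a) := by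
    rw [smul_sub, smul_inv_smul₀ hz0, Algebra.algebraMap_eq_smul_one]
  have hmul : 1 = (algebraMap ℂ A z - a) * z⁻¹ • ∑' n : ℕ, (z⁻¹ • a) ^ n := by
    rw [hfactor, smul_mul_smul_comm, mul_inv_cancel₀ hz0, one_smul, hsum.one_sub_mul_tsum_pow]
  have hres : resolvent a z = z⁻¹ • ∑' n : ℕ, (z⁻¹ • a) ^ n := by
    rw [resolvent, ← (Ring.inverse_mul_eq_iff_eq_mul _ _ _
      (spectrum.mem_resolventSet_of_spectralRadius_lt hz)).2 hmul, mul_one]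
  simpa only [hres, smul_pow, smul_smul, ← pow_succ'] using hsum.hasSum.const_smul z⁻¹

theorem spectralRadius_ne_top (a : A) : spectralRadius ℂ a ≠ ∞ := by
  have hle : spectralRadius ℂ a ≤ (‖a‖₊ * ‖(1 : A)‖₊ : ℝ≥0) :=
    iSup₂_le fun z hz => mod_cast spectrum.norm_le_norm_mul_of_mem hz
  exact (hle.trans_lt ENNReal.coe_lt_top).ne

theorem spectralRadius_lt_nnnorm_ofReal {A : Type*} [NormedRing A] [NormedAlgebra ℂ A] {a : A}
    {r s : ℝ} (hr : 0 ≤ r) (hrs : r < s) (hspec : spectralRadius ℂ a ≤ ENNReal.ofReal r) :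
    spectralRadius ℂ a < ‖(s : ℂ)‖₊ := by
  refine hspec.trans_lt ?_
  rw [← enorm_eq_nnnorm, ← ofReal_norm, Complex.norm_of_nonneg (hr.trans hrs.le)]
  exact (ENNReal.ofReal_lt_ofReal_iff (hr.trans_lt hrs)).2 hrs

theorem adjoint_apply_adjoint_resolvent {H : Type*} [NormedAddCommGroup H] [InnerProductSpace ℂ H]
    [CompleteSpace H] {T : H →L[ℂ] H} {z : ℂ} (hz : z ∈ resolventSet ℂ T) (w : H) :
    adjoint T (adjoint (resolvent T z) w) = star z • adjoint (resolvent T z) w - w := by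
  have h := congrArg star (resolvent_mul_self_eq hz)
  rw [star_mul, star_sub, star_smul, star_one] at h
  exact DFunLike.congr_fun h w

end Resolvent

section OrderedSpace

variable {E : Type*} [NormedAddCommGroup E] [NormedSpace ℂ E] [CompleteSpace E] [PartialOrder E]
  [IsOrderedAddMonoid E] [OrderClosedTopology E] [PosSMulMono ℂ E] {T : E →L[ℂ] E}

theorem monotone_resolvent (hT : Monotone T) {z : ℂ} (hz0 : 0 ≤ z)
    (hz : spectralRadius ℂ T < ‖z‖₊) : Monotone (resolvent T z : E →L[ℂ] E) := by
  refine (monotone_iff_map_nonneg _).2 fun f hf => ?_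
  have hsum : HasSum (fun n : ℕ => z⁻¹ ^ (n + 1) • (T ^ n) f) (resolvent T z f) :=
    (hasSum_resolvent hz).mapL (ContinuousLinearMap.apply ℂ E f)
  have hpow (n : ℕ) : Monotone ⇑(T ^ n) := by
    rw [FunLike.coe_pow_eq_iterate]
    exact hT.iterate n
  refine hsum.nonneg fun n => smul_nonneg (pow_nonneg (inv_nonneg.2 hz0) _) ?_
  simpa using hpow n hf

theorem le_sub_smul_resolvent (hT : Monotone T) {z c : ℂ} (hz0 : 0 ≤ z)
    (hz : spectralRadius ℂ T < ‖z‖₊) {w : E} (hw : c • w ≤ T w) :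
    w ≤ (z - c) • resolvent T z w := by
  have hRT : resolvent T z (T w) = z • resolvent T z w - w :=
    DFunLike.congr_fun
      (resolvent_mul_self_eq (spectrum.mem_resolventSet_of_spectralRadius_lt hz)) w
  have hle : c • resolvent T z w ≤ z • resolvent T z w - w := by
    simpa only [map_smul, hRT] using monotone_resolvent hT hz0 hz hw
  rw [sub_smul]
  exact le_sub_comm.1 hle

theorem nnnorm_le_spectralRadius_of_smul_le (hT : Monotone T) {c : ℂ} (hc : 0 ≤ c) {w : E}
    (hw0 : 0 ≤ w) (hne : w ≠ 0) (hw : c • w ≤ T w) : ‖c‖₊ ≤ spectralRadius ℂ T := by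
  by_contra! hlt
  have hle : w ≤ 0 := by simpa using le_sub_smul_resolvent hT hc hlt hw
  exact hne (hle.antisymm hw0)

end OrderedSpace

section CompactOperator

theorem exists_tendsto_eigenvector_of_isCompactOperator {𝕜 E : Type*} [NontriviallyNormedField 𝕜]
    [NormedAddCommGroup E] [NormedSpace 𝕜 E] {T : E →L[𝕜] E} (hT : IsCompactOperator T)
    {c : 𝕜} (hc : c ≠ 0) {x : ℕ → E} {C : ℝ} (hx : ∀ n, ‖x n‖ ≤ C)
    (hTx : Tendsto (fun n => T (x n) - c • x n) atTop (𝓝 0)) :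
    ∃ y, ∃ θ : ℕ → ℕ, StrictMono θ ∧ Tendsto (x ∘ θ) atTop (𝓝 y) ∧ T y = c • y := by
  have hK : IsCompact (closure (T '' Metric.closedBall 0 C)) :=
    IsCompactOperator.isCompact_closure_image_closedBall (f := T.toLinearMap) hT C
  obtain ⟨v, -, θ, hθ, hv⟩ := hK.tendsto_subseq (x := fun n => T (x n)) fun n =>
    subset_closure ⟨x n, mem_closedBall_zero_iff.2 (hx n), rfl⟩
  have hlim : Tendsto (x ∘ θ) atTop (𝓝 (c⁻¹ • v)) := by
    have := (hv.sub (hTx.comp hθ.tendsto_atTop)).const_smul c⁻¹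
    simpa [Function.comp_def, hc] using this
  refine ⟨c⁻¹ • v, θ, hθ, hlim, ?_⟩
  rw [smul_inv_smul₀ hc]
  exact tendsto_nhds_unique ((T.continuous.tendsto _).comp hlim) hv

theorem exists_eigenvector_norm_eq_spectralRadius {E : Type*} [NormedAddCommGroup E]
    [NormedSpace ℂ E] [CompleteSpace E] {T : E →L[ℂ] E} (hT : IsCompactOperator T)
    (hpos : 0 < spectralRadius ℂ T) :
    ∃ (z : ℂ) (v : E), ‖z‖₊ = spectralRadius ℂ T ∧ v ≠ 0 ∧ T v = z • v := by
  have : Nontrivial E := by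
    by_contra! h
    simp [Subsingleton.elim T 0] at hpos
  obtain ⟨z, hz, hzr⟩ := spectrum.exists_nnnorm_eq_spectralRadius T
  have hz0 : z ≠ 0 := by rintro rfl; simp [← hzr] at hpos
  obtain ⟨v, hv⟩ := ((hT.hasEigenvalue_iff_mem_spectrum hz0).2 hz).exists_hasEigenvector
  exact ⟨z, v, hzr, hv.2, hv.apply_eq_smul⟩

end CompactOperator

section HilbertSchmidt

variable {𝕜 H F : Type*} [RCLike 𝕜] [NormedAddCommGroup H] [InnerProductSpace 𝕜 H]
  [NormedAddCommGroup F] [NormedSpace 𝕜 F] {T : H →L[𝕜] F} {C : ℝ}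

theorem exists_finiteDimensional_norm_apply_le_of_mem_orthogonal
    (hC : ∀ (n : ℕ) (e : Fin n → H), Orthonormal 𝕜 e → ∑ i, ‖T (e i)‖ ^ 2 ≤ C)
    {δ : ℝ} (hδ : 0 < δ) :
    ∃ U : Submodule 𝕜 H, FiniteDimensional 𝕜 U ∧ ∀ v ∈ Uᗮ, ‖T v‖ ≤ δ * ‖v‖ := by
  let A : Set ℝ := {a | ∃ (n : ℕ) (e : Fin n → H), Orthonormal 𝕜 e ∧ a = ∑ i, ‖T (e i)‖ ^ 2}
  have hbdd : BddAbove A := ⟨C, by rintro a ⟨n, e, he, rfl⟩; exact hC n e he⟩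
  have hne : A.Nonempty := ⟨_, 0, ![], by simp [Orthonormal, Pairwise], rfl⟩
  -- An orthonormal family nearly attaining the supremum leaves no room for a further unit vector.
  obtain ⟨a, ⟨n, e, he, rfl⟩, ha⟩ := exists_lt_of_lt_csSup hne
    (sub_lt_self (sSup A) (pow_pos hδ 2))
  refine ⟨Submodule.span 𝕜 (Set.range e), .span_of_finite 𝕜 (Set.finite_range e), ?_⟩
  have hunit (v : H) (hv : v ∈ (Submodule.span 𝕜 (Set.range e))ᗮ) (hv1 : ‖v‖ = 1) :
      ‖T v‖ ≤ δ := by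
    have hcons : Orthonormal 𝕜 (Matrix.vecCons v e) := orthonormal_vecCons_iff.2
      ⟨hv1, fun i => (Submodule.mem_orthogonal' _ v).1 hv _ (Submodule.subset_span ⟨i, rfl⟩), he⟩
    have hle : ∑ i, ‖T (Matrix.vecCons v e i)‖ ^ 2 ≤ sSup A := le_csSup hbdd ⟨_, _, hcons, rfl⟩
    simp only [Fin.sum_univ_succ, Matrix.cons_val_zero, Matrix.cons_val_succ] at hle
    exact (sq_le_sq₀ (norm_nonneg _) hδ.le).1 (by linarith)
  intro v hv
  rcases eq_or_ne v 0 with rfl | hv0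
  · simp
  have hscale := hunit _ (Submodule.smul_mem _ ((‖v‖ : 𝕜)⁻¹) hv) (norm_smul_inv_norm hv0)
  rwa [map_smul, norm_smul, norm_inv, RCLike.norm_coe_norm,
    inv_mul_le_iff₀ (norm_pos_iff.2 hv0), mul_comm] at hscale

theorem isCompactOperator_of_sum_norm_sq_le [CompleteSpace F]
    (hC : ∀ (n : ℕ) (e : Fin n → H), Orthonormal 𝕜 e → ∑ i, ‖T (e i)‖ ^ 2 ≤ C) :
    IsCompactOperator T := by
  choose U hUfin hU using fun n : ℕ => exists_finiteDimensional_norm_apply_le_of_mem_orthogonal hC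
    (Nat.one_div_pos_of_nat (α := ℝ) (n := n))
  have hcomp (n : ℕ) : IsCompactOperator (T ∘L (U n).starProjection) :=
    ((isCompactOperator_of_locallyCompactSpace_rng (U n).subtypeL).comp_clm
      (U n).orthogonalProjectionOnto).clm_comp T
  have hdist (n : ℕ) : ‖T ∘L (U n).starProjection - T‖ ≤ 1 / ((n : ℝ) + 1) := by
    refine opNorm_le_bound _ (by positivity) fun x => ?_
    calc ‖(T ∘L (U n).starProjection - T) x‖ = ‖T ((U n)ᗮ.starProjection x)‖ := by
          rw [Submodule.starProjection_orthogonal_val, map_sub, norm_sub_rev]; rfl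
      _ ≤ 1 / ((n : ℝ) + 1) * ‖(U n)ᗮ.starProjection x‖ :=
          hU n _ (Submodule.starProjection_apply_mem _ _)
      _ ≤ 1 / ((n : ℝ) + 1) * ‖x‖ := by
          gcongr
          exact Submodule.norm_starProjection_apply_le _ _
  have hlim : Tendsto (fun n => T ∘L (U n).starProjection) atTop (𝓝 T) :=
    tendsto_iff_norm_sub_tendsto_zero.2 <| squeeze_zero (fun _ => norm_nonneg _) hdist
      tendsto_one_div_add_atTop_nhds_zero_nat
  exact isCompactOperator_of_tendsto hlim (Eventually.of_forall hcomp)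

end HilbertSchmidt

section LpOrder

variable {α : Type*} [MeasurableSpace α] {μ : Measure α}

instance instPosSMulMonoLp {p : ℝ≥0∞} : PosSMulMono ℂ (Lp ℂ p μ) where
  smul_le_smul_of_nonneg_left c hc f g hfg := by
    rw [← Lp.coeFn_le] at hfg ⊢
    filter_upwards [hfg, Lp.coeFn_smul c f, Lp.coeFn_smul c g] with x hx hf hg
    rw [hf, hg]
    exact mul_le_mul_of_nonneg_left hx hc

theorem inner_nonneg_of_nonneg {f g : Lp ℂ 2 μ} (hf : 0 ≤ f) (hg : 0 ≤ g) : 0 ≤ inner ℂ f g := by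
  rw [← Lp.coeFn_nonneg] at hf hg
  rw [L2.inner_def]
  refine integral_nonneg_of_ae ?_
  filter_upwards [hf, hg] with x hfx hgx
  rw [RCLike.inner_apply']
  exact mul_nonneg (star_nonneg_iff.2 hfx) hgx

theorem indicatorConstLp_one_nonneg {s : Set α} (hs : MeasurableSet s) (hμs : μ s ≠ ∞) :
    0 ≤ indicatorConstLp 2 hs hμs (1 : ℂ) := by
  rw [← Lp.coeFn_nonneg]
  filter_upwards [indicatorConstLp_coeFn (hs := hs) (hμs := hμs) (c := (1 : ℂ))] with x hx
  rw [hx]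
  exact Set.indicator_nonneg (fun _ _ => zero_le_one) x

theorem nonneg_of_forall_inner_nonneg [SigmaFinite μ] {f : Lp ℂ 2 μ}
    (hf : ∀ g : Lp ℂ 2 μ, 0 ≤ g → 0 ≤ inner ℂ g f) : 0 ≤ f := by
  have hset (s : Set α) (hs : MeasurableSet s) (hμs : μ s < ⊤) : 0 ≤ ∫ x in s, f x ∂μ := by
    rw [← L2.inner_indicatorConstLp_one hs hμs.ne]
    exact hf _ (indicatorConstLp_one_nonneg hs hμs.ne)
  have hint (s : Set α) (hμs : μ s < ⊤) : IntegrableOn f s μ :=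
    integrableOn_Lp_of_measure_ne_top f one_le_two hμs.ne
  have hre : ∀ᵐ x ∂μ, 0 ≤ (f x).re :=
    ae_nonneg_of_forall_setIntegral_nonneg_of_sigmaFinite (fun s _ hμs => (hint s hμs).re)
      fun s hs hμs =>
        (Complex.nonneg_iff.1 (hset s hs hμs)).1.trans (integral_re (hint s hμs)).ge
  have him : ∀ᵐ x ∂μ, (f x).im = 0 :=
    ae_eq_zero_of_forall_setIntegral_eq_of_sigmaFinite (fun s _ hμs => (hint s hμs).im)
      fun s hs hμs =>
        (integral_im (hint s hμs)).trans (Complex.nonneg_iff.1 (hset s hs hμs)).2.symm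
  rw [← Lp.coeFn_nonneg]
  filter_upwards [hre, him] with x hrex himx
  exact Complex.nonneg_iff.2 ⟨hrex, himx.symm⟩

theorem monotone_adjoint [SigmaFinite μ] {K : Lp ℂ 2 μ →L[ℂ] Lp ℂ 2 μ} (hK : Monotone K) :
    Monotone (adjoint K) := by
  refine (monotone_iff_map_nonneg _).2 fun f hf => nonneg_of_forall_inner_nonneg fun g hg => ?_
  rw [adjoint_inner_right]
  exact inner_nonneg_of_nonneg ((monotone_iff_map_nonneg K).1 hK g hg) hf

theorem inner_pos_of_ae_pos {f g : Lp ℂ 2 μ} (hf : ∀ᵐ x ∂μ, 0 < f x) (hg : 0 ≤ g) (hg0 : g ≠ 0) :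
    0 < inner ℂ f g := by
  have hnonneg : ∀ᵐ x ∂μ, 0 ≤ inner ℂ (f x) (g x) := by
    filter_upwards [hf, (Lp.coeFn_nonneg g).2 hg] with x hfx hgx
    rw [RCLike.inner_apply']
    exact mul_nonneg (star_nonneg_iff.2 hfx.le) hgx
  refine lt_of_le_of_ne' (L2.inner_def (𝕜 := ℂ) f g ▸ integral_nonneg_of_ae hnonneg)
    fun h0 => hg0 ?_
  have hint := L2.integrable_inner (𝕜 := ℂ) f g
  have hre0 : ∫ x, (inner ℂ (f x) (g x)).re ∂μ = 0 := by
    rw [show ∫ x, (inner ℂ (f x) (g x)).re ∂μ = _ from integral_re hint, ← L2.inner_def, h0]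
    exact Complex.zero_re
  rw [integral_eq_zero_iff_of_nonneg_ae (hnonneg.mono fun x hx => (Complex.nonneg_iff.1 hx).1)
    hint.re] at hre0
  rw [Lp.eq_zero_iff_ae_eq_zero]
  filter_upwards [hf, hnonneg, hre0] with x hfx hx hx0
  have : inner ℂ (f x) (g x) = 0 := Complex.ext hx0 (Complex.nonneg_iff.1 hx).2.symm
  rw [RCLike.inner_apply', mul_eq_zero] at this
  exact this.resolve_left (by simpa using hfx.ne')

end LpOrder

section KreinRutman

variable {α : Type*} [MeasurableSpace α] {μ : Measure α} {K : Lp ℂ 2 μ →L[ℂ] Lp ℂ 2 μ}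

theorem norm_le_mul_norm_adjoint_resolvent (hK : Monotone K) {r s : ℝ} (hr : 0 ≤ r)
    (hrs : r < s) (hspec : spectralRadius ℂ K ≤ ENNReal.ofReal r) {w : Lp ℂ 2 μ} (hw : 0 ≤ w)
    (hKw : (r : ℂ) • w ≤ K w) : ‖w‖ ≤ (s - r) * ‖adjoint (resolvent K (s : ℂ)) w‖ := by
  set R : Lp ℂ 2 μ →L[ℂ] Lp ℂ 2 μ := resolvent K (s : ℂ)
  have hle : w ≤ ((s : ℂ) - r) • R w := le_sub_smul_resolvent hK
    (Complex.zero_le_real.2 (hr.trans hrs.le)) (spectralRadius_lt_nnnorm_ofReal hr hrs hspec) hKw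
  have hinner : inner ℂ w w ≤ ((s : ℂ) - r) * inner ℂ (adjoint R w) w := by
    have := inner_nonneg_of_nonneg hw (sub_nonneg.2 hle)
    rwa [inner_sub_right, inner_smul_right, ← adjoint_inner_left, sub_nonneg] at this
  have hsq : ‖w‖ * ‖w‖ ≤ (s - r) * ‖adjoint R w‖ * ‖w‖ := by
    calc ‖w‖ * ‖w‖ = ‖inner ℂ w w‖ := by simp [inner_self_eq_norm_sq_to_K, sq]
      _ ≤ ‖((s : ℂ) - r) * inner ℂ (adjoint R w) w‖ :=
        CStarAlgebra.norm_le_norm_of_nonneg_of_le (inner_nonneg_of_nonneg hw hw) hinner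
      _ ≤ (s - r) * ‖adjoint R w‖ * ‖w‖ := by
        rw [norm_mul, ← Complex.ofReal_sub, Complex.norm_of_nonneg (sub_nonneg.2 hrs.le), mul_assoc]
        gcongr
        exact norm_inner_le_norm _ _
  rcases eq_or_ne w 0 with rfl | hw0
  · simp
  · exact le_of_mul_le_mul_right hsq (norm_pos_iff.2 hw0)

theorem exists_nonneg_approx_adjoint_eigenvector [SigmaFinite μ] (hK : Monotone K) {r s : ℝ}
    (hr : 0 ≤ r) (hrs : r < s) (hspec : spectralRadius ℂ K ≤ ENNReal.ofReal r) {w : Lp ℂ 2 μ}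
    (hw : 0 ≤ w) (hw0 : w ≠ 0) (hKw : (r : ℂ) • w ≤ K w) :
    ∃ φ : Lp ℂ 2 μ, 0 ≤ φ ∧ ‖φ‖ = 1 ∧ ‖adjoint K φ - (r : ℂ) • φ‖ ≤ 2 * (s - r) := by
  have hs := spectralRadius_lt_nnnorm_ofReal hr hrs hspec
  set ψ : Lp ℂ 2 μ := adjoint (resolvent K (s : ℂ)) w with hψdef
  have hψ : 0 ≤ ψ := (monotone_iff_map_nonneg _).1 (monotone_adjoint
    (monotone_resolvent hK (Complex.zero_le_real.2 (hr.trans hrs.le)) hs)) w hw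
  have hwψ : ‖w‖ ≤ (s - r) * ‖ψ‖ := norm_le_mul_norm_adjoint_resolvent hK hr hrs hspec hw hKw
  have hψ0 : 0 < ‖ψ‖ :=
    pos_of_mul_pos_right ((norm_pos_iff.2 hw0).trans_le hwψ) (sub_nonneg.2 hrs.le)
  have hKψ : adjoint K ψ - (r : ℂ) • ψ = ((s - r : ℝ) : ℂ) • ψ - w := by
    rw [adjoint_apply_adjoint_resolvent (spectrum.mem_resolventSet_of_spectralRadius_lt hs),
      ← hψdef, Complex.star_def, Complex.conj_ofReal, Complex.ofReal_sub, sub_smul]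
    abel
  refine ⟨((‖ψ‖⁻¹ : ℝ) : ℂ) • ψ, smul_nonneg (Complex.zero_le_real.2 (by positivity)) hψ, ?_, ?_⟩
  · rw [norm_smul, Complex.norm_of_nonneg (by positivity), inv_mul_cancel₀ hψ0.ne']
  · rw [map_smul, smul_comm, ← smul_sub, hKψ, norm_smul, Complex.norm_of_nonneg (by positivity),
      inv_mul_le_iff₀ hψ0]
    calc ‖((s - r : ℝ) : ℂ) • ψ - w‖ ≤ ‖((s - r : ℝ) : ℂ) • ψ‖ + ‖w‖ := norm_sub_le _ _
      _ ≤ (s - r) * ‖ψ‖ + (s - r) * ‖ψ‖ := by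
        rw [norm_smul, Complex.norm_of_nonneg (sub_nonneg.2 hrs.le)]
        gcongr
      _ = ‖ψ‖ * (2 * (s - r)) := by ring

theorem exists_nonneg_adjoint_eigenvector_of_smul_le [SigmaFinite μ] (hK : Monotone K)
    (hcomp : IsCompactOperator (adjoint K)) {r : ℝ} (hr : 0 < r)
    (hspec : spectralRadius ℂ K ≤ ENNReal.ofReal r) {w : Lp ℂ 2 μ}
    (hw : 0 ≤ w) (hw0 : w ≠ 0) (hKw : (r : ℂ) • w ≤ K w) :
    ∃ φ : Lp ℂ 2 μ, 0 ≤ φ ∧ φ ≠ 0 ∧ adjoint K φ = (r : ℂ) • φ := by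
  choose φ hφ hφ1 hφK using fun n : ℕ => exists_nonneg_approx_adjoint_eigenvector hK hr.le
    (lt_add_of_pos_right r (Nat.one_div_pos_of_nat (α := ℝ) (n := n))) hspec hw hw0 hKw
  have htend : Tendsto (fun n => adjoint K (φ n) - (r : ℂ) • φ n) atTop (𝓝 0) := by
    refine squeeze_zero_norm hφK ?_
    simpa [add_sub_cancel_left] using (tendsto_one_div_add_atTop_nhds_zero_nat (𝕜 := ℝ)).const_mul 2
  obtain ⟨ψ, θ, -, hψ, hKψ⟩ := exists_tendsto_eigenvector_of_isCompactOperator hcomp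
    (Complex.ofReal_ne_zero.2 hr.ne') (fun n => (hφ1 n).le) htend
  have hψ1 : ‖ψ‖ = 1 := tendsto_nhds_unique hψ.norm (by simp [hφ1])
  exact ⟨ψ, ge_of_tendsto' hψ fun n => hφ (θ n), fun h => by simp [h] at hψ1, hKψ⟩

theorem inner_pow_apply_of_adjoint_apply_eq_smul {𝕜 H : Type*} [RCLike 𝕜] [NormedAddCommGroup H]
    [InnerProductSpace 𝕜 H] [CompleteSpace H] {T : H →L[𝕜] H} {φ : H} {c : 𝕜}
    (hφ : adjoint T φ = c • φ) (n : ℕ) (h : H) :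
    inner 𝕜 ((T ^ n) h) φ = c ^ n * inner 𝕜 h φ := by
  induction n with
  | zero => simp
  | succ n ih =>
    calc inner 𝕜 ((T ^ (n + 1)) h) φ = inner 𝕜 ((T ^ n) h) (adjoint T φ) := by
          rw [adjoint_inner_right, pow_succ', mul_apply_eq_comp]
      _ = c ^ (n + 1) * inner 𝕜 h φ := by
          rw [hφ, inner_smul_right, ih, pow_succ', mul_assoc]

theorem eq_zero_of_pow_apply_eq_smul_add {φ f g : Lp ℂ 2 μ} {r : ℝ} (hφ : 0 ≤ φ) (hφ0 : φ ≠ 0)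
    (hKφ : adjoint K φ = (r : ℂ) • φ) {m n : ℕ}
    (hpos : ∀ h : Lp ℂ 2 μ, 0 ≤ h → h ≠ 0 → ∀ᵐ x ∂μ, 0 < (K ^ m) h x)
    (hg : 0 ≤ g) (hfg : (K ^ n) f = (r : ℂ) ^ n • f + g) : g = 0 := by
  by_contra hg0
  have hgφ : inner ℂ g φ = 0 := by
    have h := inner_pow_apply_of_adjoint_apply_eq_smul hKφ n f
    rw [hfg, inner_add_left, inner_smul_left] at h
    simpa using h
  refine (inner_pos_of_ae_pos (hpos g hg hg0) hφ hφ0).ne' ?_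
  rw [inner_pow_apply_of_adjoint_apply_eq_smul hKφ, hgφ, mul_zero]

end KreinRutman

section IntegralOperator

variable {𝕜 α β : Type*} [RCLike 𝕜] [MeasurableSpace α] [MeasurableSpace β]
  {μ : Measure α} {ν : Measure β}

/-- The operator `T : L²(ν) → L²(μ)` is the integral operator with kernel `k`. Square integrability
of `k`, or of its sections `k x`, is not part of the notion. -/
def HasIntegralKernel (T : Lp 𝕜 2 ν →L[𝕜] Lp 𝕜 2 μ) (k : α → β → 𝕜) : Prop :=
  ∀ f : Lp 𝕜 2 ν, ∀ᵐ x ∂μ, T f x = ∫ y, k x y * f y ∂ν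

theorem norm_sq_eq_integral_norm_sq (f : Lp 𝕜 2 μ) : ‖f‖ ^ 2 = ∫ x, ‖f x‖ ^ 2 ∂μ := by
  rw [← inner_self_eq_norm_sq (𝕜 := 𝕜), L2.inner_def, ← integral_re (L2.integrable_inner f f)]
  simp only [inner_self_eq_norm_sq]

theorem integral_mul_eq_inner_toLp_star {h : β → 𝕜} (hh : MemLp h 2 ν) (f : Lp 𝕜 2 ν) :
    ∫ y, h y * f y ∂ν = inner 𝕜 (hh.star.toLp (star h)) f := by
  rw [L2.inner_def]
  refine integral_congr_ae ?_
  filter_upwards [hh.star.coeFn_toLp] with y hy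
  rw [hy, RCLike.inner_apply', Pi.star_apply, RCLike.star_def, RCLike.conj_conj]

theorem norm_toLp_star_sq {h : β → 𝕜} (hh : MemLp h 2 ν) :
    ‖hh.star.toLp (star h)‖ ^ 2 = ∫ y, ‖h y‖ ^ 2 ∂ν := by
  rw [norm_sq_eq_integral_norm_sq]
  refine integral_congr_ae ?_
  filter_upwards [hh.star.coeFn_toLp] with y hy
  rw [hy, Pi.star_apply, norm_star]

theorem ae_memLp_two_section [SFinite μ] [SFinite ν] {k : α → β → 𝕜}
    (hk : MemLp (Function.uncurry k) 2 (μ.prod ν)) : ∀ᵐ x ∂μ, MemLp (k x) 2 ν := by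
  have hsq := ((memLp_two_iff_integrable_sq_norm hk.1).1 hk).prod_right_ae
  filter_upwards [hsq, hk.1.prodMk_left] with x hx hmeas
  exact (memLp_two_iff_integrable_sq_norm hmeas).2 hx

theorem memLp_two_ofReal_of_lintegral_lt_top [SFinite ν] {k : α → β → ℝ}
    (hmeas : Measurable (Function.uncurry k))
    (hfin : ∫⁻ x, ∫⁻ y, ENNReal.ofReal (k x y ^ 2) ∂ν ∂μ < ∞) :
    MemLp (Function.uncurry fun x y => (k x y : 𝕜)) 2 (μ.prod ν) := by
  have hsq : Integrable (fun p => Function.uncurry k p ^ 2) (μ.prod ν) := by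
    refine ⟨(hmeas.pow_const 2).aestronglyMeasurable, ?_⟩
    rw [hasFiniteIntegral_iff_ofReal (.of_forall fun p => sq_nonneg _),
      lintegral_prod _ (hmeas.pow_const 2).ennreal_ofReal.aemeasurable]
    exact hfin
  exact ((memLp_two_iff_integrable_sq hmeas.aestronglyMeasurable).2 hsq).ofReal

theorem memLp_two_star_swap [SFinite μ] [SFinite ν] {k : α → β → 𝕜}
    (hk : MemLp (Function.uncurry k) 2 (μ.prod ν)) :
    MemLp (Function.uncurry fun y x => star (k x y)) 2 (ν.prod μ) :=
  (hk.comp_measurePreserving Measure.measurePreserving_swap).star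

variable {T : Lp 𝕜 2 ν →L[𝕜] Lp 𝕜 2 μ} {k : α → β → 𝕜}

theorem HasIntegralKernel.sum_norm_sq_le [SFinite μ] [SFinite ν] (hT : HasIntegralKernel T k)
    (hk : MemLp (Function.uncurry k) 2 (μ.prod ν)) {n : ℕ} {e : Fin n → Lp 𝕜 2 ν}
    (he : Orthonormal 𝕜 e) : ∑ i, ‖T (e i)‖ ^ 2 ≤ ∫ x, ∫ y, ‖k x y‖ ^ 2 ∂ν ∂μ := by
  have hint (i : Fin n) : Integrable (fun x => ‖T (e i) x‖ ^ 2) μ :=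
    (memLp_two_iff_integrable_sq_norm (Lp.aestronglyMeasurable _)).1 (Lp.memLp _)
  have hbessel : ∀ᵐ x ∂μ, ∑ i, ‖T (e i) x‖ ^ 2 ≤ ∫ y, ‖k x y‖ ^ 2 ∂ν := by
    filter_upwards [ae_memLp_two_section hk, ae_all_iff.2 fun i => hT (e i)] with x hkx hTx
    simp only [hTx, integral_mul_eq_inner_toLp_star hkx]
    simp only [norm_inner_symm, ← norm_toLp_star_sq hkx]
    exact he.sum_inner_products_le _
  calc ∑ i, ‖T (e i)‖ ^ 2 = ∫ x, ∑ i, ‖T (e i) x‖ ^ 2 ∂μ := by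
        rw [integral_finsetSum _ fun i _ => hint i]
        simp only [norm_sq_eq_integral_norm_sq]
    _ ≤ ∫ x, ∫ y, ‖k x y‖ ^ 2 ∂ν ∂μ :=
        integral_mono_ae (integrable_finsetSum _ fun i _ => hint i)
          ((memLp_two_iff_integrable_sq_norm hk.1).1 hk).integral_prod_left hbessel

theorem HasIntegralKernel.isCompactOperator [SFinite μ] [SFinite ν] (hT : HasIntegralKernel T k)
    (hk : MemLp (Function.uncurry k) 2 (μ.prod ν)) : IsCompactOperator T :=
  isCompactOperator_of_sum_norm_sq_le fun _ _ he => hT.sum_norm_sq_le hk he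

theorem integrable_star_mul_prod_restrict [SFinite μ] [SFinite ν]
    (hk : MemLp (Function.uncurry k) 2 (μ.prod ν)) (g : Lp 𝕜 2 μ) {s : Set β} (hs : ν s ≠ ∞) :
    Integrable (Function.uncurry fun x y => star (k x y) * g x) (μ.prod (ν.restrict s)) := by
  have : IsFiniteMeasure (ν.restrict s) := ⟨by simpa [lt_top_iff_ne_top]⟩
  have hks : MemLp (Function.uncurry k) 2 (μ.prod (ν.restrict s)) := by
    have h := hk.restrict (Set.univ ×ˢ s)
    rwa [← Measure.prod_restrict, Measure.restrict_univ] at h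
  exact hks.star.integrable_mul ((Lp.memLp g).comp_fst (ν.restrict s))

protected theorem HasIntegralKernel.adjoint [SFinite μ] [SigmaFinite ν] (hT : HasIntegralKernel T k)
    (hk : MemLp (Function.uncurry k) 2 (μ.prod ν)) :
    HasIntegralKernel (ContinuousLinearMap.adjoint T) fun y x => star (k x y) := by
  intro g
  refine ae_eq_of_forall_setIntegral_eq_of_sigmaFinite
    (fun s _ hs => integrableOn_Lp_of_measure_ne_top _ one_le_two hs.ne)
    (fun s _ hs => (integrable_star_mul_prod_restrict hk g hs.ne).integral_prod_right)
    fun s hsm hs => ?_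
  rw [← L2.inner_indicatorConstLp_one hsm hs.ne, adjoint_inner_right, L2.inner_def,
    ← integral_integral_swap (integrable_star_mul_prod_restrict hk g hs.ne)]
  refine integral_congr_ae ?_
  filter_upwards [hT (indicatorConstLp 2 hsm hs.ne 1)] with x hx
  rw [RCLike.inner_apply', hx, integral_mul_const, ← integral_indicator hsm, ← integral_conj]
  congr 1
  refine integral_congr_ae ?_
  filter_upwards [indicatorConstLp_coeFn (p := 2) (hs := hsm) (hμs := hs.ne) (c := (1 : 𝕜))]
    with y hy
  by_cases hys : y ∈ s <;> simp [hy, hys]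

theorem HasIntegralKernel.star_adjoint_star [SFinite μ] [SigmaFinite ν]
    (hT : HasIntegralKernel T k) (hk : MemLp (Function.uncurry k) 2 (μ.prod ν)) {h : α → 𝕜}
    (hh : MemLp h 2 μ) :
    (fun y => ∫ x, h x * k x y ∂μ) =ᵐ[ν] star ⇑(adjoint T (hh.star.toLp (star h))) := by
  filter_upwards [hT.adjoint hk (hh.star.toLp (star h))] with y hy
  rw [Pi.star_apply, hy, RCLike.star_def, ← integral_conj]
  refine integral_congr_ae ?_
  filter_upwards [hh.star.coeFn_toLp] with x hx
  rw [hx]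
  simp [mul_comm]

theorem HasIntegralKernel.comp {γ : Type*} [MeasurableSpace γ] {ρ : Measure γ} [SFinite μ]
    [SigmaFinite ν] {L : Lp 𝕜 2 μ →L[𝕜] Lp 𝕜 2 ρ} {l : γ → α → 𝕜} (hL : HasIntegralKernel L l)
    (hl : ∀ᵐ x ∂ρ, MemLp (l x) 2 μ) (hT : HasIntegralKernel T k)
    (hk : MemLp (Function.uncurry k) 2 (μ.prod ν)) :
    HasIntegralKernel (L ∘L T) (fun x y => ∫ z, l x z * k z y ∂μ) ∧
      ∀ᵐ x ∂ρ, MemLp (fun y => ∫ z, l x z * k z y ∂μ) 2 ν := by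
  refine ⟨fun f => ?_, ?_⟩
  · filter_upwards [hl, hL (T f)] with x hlx hx
    rw [comp_apply, hx, integral_mul_eq_inner_toLp_star hlx, ← adjoint_inner_left, L2.inner_def]
    refine integral_congr_ae ?_
    filter_upwards [hT.star_adjoint_star hk hlx] with y hy
    rw [RCLike.inner_apply', hy, Pi.star_apply, RCLike.star_def]
  · filter_upwards [hl] with x hlx
    exact (memLp_congr_ae (hT.star_adjoint_star hk hlx)).2 (Lp.memLp _).star

theorem HasIntegralKernel.pow_succ_iterKernel [SigmaFinite μ] {K : Lp 𝕜 2 μ →L[𝕜] Lp 𝕜 2 μ}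
    {k : α → α → ℝ}
    (hK : HasIntegralKernel K fun x y => (k x y : 𝕜))
    (hk : MemLp (Function.uncurry fun x y => (k x y : 𝕜)) 2 (μ.prod μ)) (n : ℕ) :
    HasIntegralKernel (K ^ (n + 1)) (fun x y => (iterKernel μ k n x y : 𝕜)) ∧
      ∀ᵐ x ∂μ, MemLp (fun y => (iterKernel μ k n x y : 𝕜)) 2 μ := by
  induction n with
  | zero => exact ⟨by simpa [iterKernel] using hK, ae_memLp_two_section hk⟩
  | succ n ih =>
    have hcomp := ih.1.comp ih.2 hK hk
    rw [← mul_def, ← pow_succ] at hcomp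
    simpa only [iterKernel, ← RCLike.ofReal_mul, integral_ofReal] using hcomp

end IntegralOperator

section NonnegKernel

variable {α β : Type*} [MeasurableSpace α] [MeasurableSpace β] {μ : Measure α} {ν : Measure β}
  {T : Lp ℂ 2 ν →L[ℂ] Lp ℂ 2 μ} {k : α → β → ℂ}

theorem HasIntegralKernel.monotone (hT : HasIntegralKernel T k) (hk : ∀ x y, 0 ≤ k x y) :
    Monotone T := by
  refine (monotone_iff_map_nonneg T).2 fun f hf => (Lp.coeFn_nonneg _).1 ?_
  rw [← Lp.coeFn_nonneg] at hf
  filter_upwards [hT f] with x hx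
  rw [hx]
  exact integral_nonneg_of_ae (hf.mono fun y hy => mul_nonneg (hk x y) hy)

theorem HasIntegralKernel.ae_pos (hT : HasIntegralKernel T k) (hk : ∀ x y, 0 < k x y)
    (hk2 : ∀ᵐ x ∂μ, MemLp (k x) 2 ν) {g : Lp ℂ 2 ν} (hg : 0 ≤ g) (hg0 : g ≠ 0) :
    ∀ᵐ x ∂μ, 0 < T g x := by
  filter_upwards [hT g, hk2] with x hx hkx
  rw [hx, integral_mul_eq_inner_toLp_star hkx]
  refine inner_pos_of_ae_pos ?_ hg hg0
  filter_upwards [hkx.star.coeFn_toLp] with y hy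
  rw [hy]
  exact star_pos_iff.2 (hk x y)

/-- The pointwise absolute value `|f|` of an `L²` function, as a complex-valued `L²` function. -/
def modulus (f : Lp ℂ 2 μ) : Lp ℂ 2 μ := (Lp.memLp f).norm.ofReal.toLp

theorem modulus_ae_eq (f : Lp ℂ 2 μ) : modulus f =ᵐ[μ] fun x => (‖f x‖ : ℂ) :=
  (Lp.memLp f).norm.ofReal.coeFn_toLp

theorem modulus_nonneg (f : Lp ℂ 2 μ) : 0 ≤ modulus f := by
  rw [← Lp.coeFn_nonneg]
  filter_upwards [modulus_ae_eq f] with x hx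
  rw [hx]
  exact Complex.zero_le_real.2 (norm_nonneg _)

theorem modulus_eq_zero_iff {f : Lp ℂ 2 μ} : modulus f = 0 ↔ f = 0 := by
  simp only [Lp.eq_zero_iff_ae_eq_zero]
  exact eventually_congr ((modulus_ae_eq f).mono fun x hx => by simp [hx])

theorem modulus_smul (c : ℂ) (f : Lp ℂ 2 μ) : modulus (c • f) = (‖c‖ : ℂ) • modulus f := by
  refine Lp.ext ?_
  filter_upwards [modulus_ae_eq (c • f), modulus_ae_eq f, Lp.coeFn_smul c f,
    Lp.coeFn_smul (‖c‖ : ℂ) (modulus f)] with x h1 h2 h3 h4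
  rw [h1, h4, h3, Pi.smul_apply, Pi.smul_apply, h2, norm_smul, Complex.ofReal_mul, smul_eq_mul]

theorem HasIntegralKernel.modulus_apply_le (hT : HasIntegralKernel T k) (hk : ∀ x y, 0 ≤ k x y)
    (f : Lp ℂ 2 ν) : modulus (T f) ≤ T (modulus f) := by
  rw [← Lp.coeFn_le]
  filter_upwards [modulus_ae_eq (T f), hT f, hT (modulus f)] with x hmod hx hxmod
  have hnorm : ∫ y, k x y * modulus f y ∂ν = ((∫ y, ‖k x y * f y‖ ∂ν : ℝ) : ℂ) := by
    rw [← integral_complex_ofReal]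
    refine integral_congr_ae ?_
    filter_upwards [modulus_ae_eq f] with y hy
    rw [hy, norm_mul, Complex.ofReal_mul, ← Complex.eq_coe_norm_of_nonneg (hk x y)]
  rw [hmod, hx, hxmod, hnorm]
  exact Complex.real_le_real.2 (norm_integral_le_integral_norm _)

theorem HasIntegralKernel.smul_indicator_le {K : Lp ℂ 2 μ →L[ℂ] Lp ℂ 2 μ} {k : α → α → ℂ}
    (hK : HasIntegralKernel K k) (hk : ∀ x y, 0 ≤ k x y)
    (hk2 : ∀ᵐ x ∂μ, MemLp (k x) 2 μ) {s : Set α} (hs : MeasurableSet s) (hμs : μ s ≠ ∞)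
    {c : ℂ} (hc : ∀ x ∈ s, ∀ y ∈ s, c ≤ k x y) :
    (μ.real s • c) • indicatorConstLp 2 hs hμs (1 : ℂ) ≤ K (indicatorConstLp 2 hs hμs 1) := by
  set u := indicatorConstLp 2 hs hμs (1 : ℂ)
  have hu : u =ᵐ[μ] s.indicator fun _ => 1 := indicatorConstLp_coeFn
  rw [← Lp.coeFn_le]
  filter_upwards [Lp.coeFn_smul (μ.real s • c) u, hu, hK u, hk2] with x hsmul hux hKx hkx
  have hint : ∫ y, k x y * u y ∂μ = ∫ y in s, k x y ∂μ := by
    rw [← integral_indicator hs]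
    refine integral_congr_ae ?_
    filter_upwards [hu] with y hy
    by_cases hys : y ∈ s <;> simp [hy, hys]
  rw [hsmul, Pi.smul_apply, hux, hKx, hint]
  by_cases hxs : x ∈ s
  · rw [Set.indicator_of_mem hxs, smul_eq_mul, mul_one, ← setIntegral_const]
    refine setIntegral_mono_on (integrableOn_const hμs) ?_ hs (hc x hxs)
    have : IsFiniteMeasure (μ.restrict s) := ⟨by simpa [lt_top_iff_ne_top]⟩
    exact (hkx.restrict s).integrable one_le_two
  · simpa [hxs] using integral_nonneg_of_ae (.of_forall fun y => hk x y)

theorem HasIntegralKernel.spectralRadius_pos [SigmaFinite μ] {K : Lp ℂ 2 μ →L[ℂ] Lp ℂ 2 μ}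
    {k : α → α → ℂ} (hK : HasIntegralKernel K k) (hk : ∀ x y, 0 ≤ k x y)
    (hk2 : ∀ᵐ x ∂μ, MemLp (k x) 2 μ) {s : Set α} (hs : MeasurableSet s) (hμs : 0 < μ s)
    {c : ℂ} (hc0 : 0 < c) (hc : ∀ x ∈ s, ∀ y ∈ s, c ≤ k x y) : 0 < spectralRadius ℂ K := by
  obtain ⟨t, ht, hts, hμt, hμt_top⟩ := Measure.exists_subset_measure_lt_top hs hμs
  set u := indicatorConstLp 2 ht hμt_top.ne (1 : ℂ)
  have hreal : 0 < μ.real t := ENNReal.toReal_pos hμt.ne' hμt_top.ne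
  have hu0 : u ≠ 0 := by
    rw [← norm_ne_zero_iff, norm_indicatorConstLp two_ne_zero ENNReal.ofNat_ne_top]
    have := Real.rpow_pos_of_pos hreal (1 / 2)
    simpa using this.ne'
  have hle := hK.smul_indicator_le hk hk2 ht hμt_top.ne fun x hx y hy => hc x (hts hx) y (hts hy)
  refine lt_of_lt_of_le ?_ (nnnorm_le_spectralRadius_of_smul_le (hK.monotone hk)
    (smul_nonneg hreal.le hc0.le) (indicatorConstLp_one_nonneg ht hμt_top.ne) hu0 hle)
  simpa using smul_ne_zero hreal.ne' hc0.ne'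

theorem HasIntegralKernel.exists_nonneg_spectralRadius_smul_le
    {K : Lp ℂ 2 μ →L[ℂ] Lp ℂ 2 μ} {k : α → α → ℂ} (hK : HasIntegralKernel K k)
    (hk : ∀ x y, 0 ≤ k x y) (hcomp : IsCompactOperator K) (hpos : 0 < spectralRadius ℂ K) :
    ∃ w, 0 ≤ w ∧ w ≠ 0 ∧ ((spectralRadius ℂ K).toReal : ℂ) • w ≤ K w := by
  obtain ⟨z, v, hz, hv0, hKv⟩ := exists_eigenvector_norm_eq_spectralRadius hcomp hpos
  refine ⟨modulus v, modulus_nonneg v, mt modulus_eq_zero_iff.1 hv0, ?_⟩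
  have := hK.modulus_apply_le hk v
  rwa [hKv, modulus_smul, ← coe_nnnorm, ← ENNReal.coe_toReal, hz] at this

theorem HasIntegralKernel.exists_nonneg_adjoint_eigenvector [SigmaFinite μ]
    {K : Lp ℂ 2 μ →L[ℂ] Lp ℂ 2 μ} {k : α → α → ℂ} (hK : HasIntegralKernel K k)
    (hk : ∀ x y, 0 ≤ k x y) (hk2 : MemLp (Function.uncurry k) 2 (μ.prod μ))
    (hpos : 0 < spectralRadius ℂ K) :
    ∃ φ, 0 ≤ φ ∧ φ ≠ 0 ∧ adjoint K φ = ((spectralRadius ℂ K).toReal : ℂ) • φ := by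
  have htop : spectralRadius ℂ K ≠ ∞ := spectralRadius_ne_top K
  obtain ⟨w, hw, hw0, hKw⟩ :=
    hK.exists_nonneg_spectralRadius_smul_le hk (hK.isCompactOperator hk2) hpos
  exact exists_nonneg_adjoint_eigenvector_of_smul_le (hK.monotone hk)
    ((hK.adjoint hk2).isCompactOperator (memLp_two_star_swap hk2))
    (ENNReal.toReal_pos hpos.ne' htop) (ENNReal.ofReal_toReal htop).ge hw hw0 hKw

end NonnegKernel

/-- if `K^N f = λ^N f + g` with `g ≥ 0` μ-a.e. (and real), where `λ` is the
spectral radius of the positive integral operator `K`, then `g = 0`. -/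
theorem statement16 {Ω : Type*} [MeasurableSpace Ω]
    (μ : Measure Ω) [SigmaFinite μ]
    (k : Ω → Ω → ℝ) (hkmeas : Measurable (Function.uncurry k))
    (hL2 : ∫⁻ x, ∫⁻ y, ENNReal.ofReal (k x y ^ 2) ∂μ ∂μ < ⊤)
    (hpos : ∀ x y, 0 ≤ k x y)
    (S : Set Ω) (hS : MeasurableSet S) (hμS : 0 < μ S)
    (ε : ℝ) (hε : 0 < ε) (hkS : ∀ x ∈ S, ∀ y ∈ S, ε ≤ k x y)
    (hprim : ∃ N : ℕ, ∀ x y, 0 < iterKernel μ k N x y)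
    (K : Lp ℂ 2 μ →L[ℂ] Lp ℂ 2 μ)
    (hK : ∀ f : Lp ℂ 2 μ, ∀ᵐ x ∂μ, (K f : Lp ℂ 2 μ) x = ∫ y, (k x y : ℂ) * f y ∂μ) :
    ∀ N : ℕ, 1 ≤ N → ∀ f g : Lp ℂ 2 μ,
      (∀ᵐ x ∂μ, 0 ≤ (g x).re ∧ (g x).im = 0) →
      (K ^ N) f = (((spectralRadius ℂ K).toReal : ℂ) ^ N) • f + g →
      g = 0 := by
  intro N _ f g hg hfg
  have hkernel : HasIntegralKernel K fun x y => (k x y : ℂ) := hK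
  have hmem : MemLp (Function.uncurry fun x y => (k x y : ℂ)) 2 (μ.prod μ) :=
    memLp_two_ofReal_of_lintegral_lt_top hkmeas hL2
  have hnonneg (x y : Ω) : 0 ≤ (k x y : ℂ) := Complex.zero_le_real.2 (hpos x y)
  have hradius : 0 < spectralRadius ℂ K :=
    hkernel.spectralRadius_pos hnonneg (ae_memLp_two_section hmem) hS hμS
      (Complex.zero_lt_real.2 hε) fun x hx y hy => Complex.real_le_real.2 (hkS x hx y hy)
  obtain ⟨φ, hφ, hφ0, hKφ⟩ := hkernel.exists_nonneg_adjoint_eigenvector hnonneg hmem hradius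
  obtain ⟨m, hm⟩ := hprim
  obtain ⟨hpow, hpow2⟩ := hkernel.pow_succ_iterKernel hmem m
  have hpositive (h : Lp ℂ 2 μ) (hh : 0 ≤ h) (hh0 : h ≠ 0) : ∀ᵐ x ∂μ, 0 < (K ^ (m + 1)) h x :=
    hpow.ae_pos (fun x y => Complex.zero_lt_real.2 (hm x y)) hpow2 hh hh0
  have hg0 : 0 ≤ g :=
    (Lp.coeFn_nonneg g).1 (hg.mono fun x hx => Complex.nonneg_iff.2 ⟨hx.1, hx.2.symm⟩)
  exact eq_zero_of_pow_apply_eq_smul_add hφ hφ0 hKφ hpositive hg0 hfg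

end
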